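/- Let R be a commutative principal ideal domain and A ∈ sl_n(R) a trace-zero matrix with n ≥ 3. Then there exist trace-zero matrices X, Y ∈ sl_n(R) such that XY − YX = A. Moreover, X can be chosen such that for every maximal ideal p of R the reduction X mod p is gl_n(R/p)-regular, and such that X mod p is sl_n(R/p)-regular for every maximal ideal p for which A mod p is not a scalar matrix. -/

import Mathlib

open Matrix

/-- The centralizer of a matrix `X` inside all `n × n` matrices, as a submodule. -/
def glCent {R : Type*} [CommRing R] {n : ℕ} (X : Matrix (Fin n) (Fin n) R) :
    Submodule R (Matrix (Fin n) (Fin n) R) where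
  carrier := {Y | X * Y = Y * X}
  add_mem' := fun {a b} ha hb => by
    simp only [Set.mem_setOf_eq] at *
    rw [Matrix.mul_add, Matrix.add_mul, ha, hb]
  zero_mem' := by simp
  smul_mem' := fun c a ha => by
    simp only [Set.mem_setOf_eq] at *
    rw [Matrix.mul_smul, Matrix.smul_mul, ha]

/-- The centralizer of a matrix `X` inside the trace-zero `n × n` matrices, as a submodule. -/
def slCent {R : Type*} [CommRing R] {n : ℕ} (X : Matrix (Fin n) (Fin n) R) :
    Submodule R (Matrix (Fin n) (Fin n) R) where
  carrier := {Y | Y.trace = 0 ∧ X * Y = Y * X}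
  add_mem' := fun {a b} ha hb =>
    ⟨by rw [trace_add, ha.1, hb.1, add_zero],
     by rw [Matrix.mul_add, Matrix.add_mul, ha.2, hb.2]⟩
  zero_mem' := ⟨by simp, by simp⟩
  smul_mem' := fun c a ha =>
    ⟨by rw [trace_smul, ha.1, smul_zero],
     by rw [Matrix.mul_smul, Matrix.smul_mul, ha.2]⟩

/-- The matrix with ones on the superdiagonal, `b` in the lower left corner and zeros elsewhere:
the companion matrix of `x ^ (k + 1) - b`. -/
def twistedShift {R : Type*} [CommRing R] (k : ℕ) (b : R) :
    Matrix (Fin (k + 1)) (Fin (k + 1)) R :=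
  Matrix.of fun i j => (Fin.snoc (fun i' : Fin k => if j = i'.succ then 1 else 0)
    (if j = 0 then b else 0) : Fin (k + 1) → R) i

section
variable {R : Type*} [CommRing R] {k : ℕ}

lemma twistedShift_castSucc (b : R) (i : Fin k) (j : Fin (k + 1)) :
    twistedShift k b i.castSucc j = if j = i.succ then 1 else 0 := by
  simp [twistedShift]

lemma twistedShift_last (b : R) (j : Fin (k + 1)) :
    twistedShift k b (Fin.last k) j = if j = 0 then b else 0 := by
  simp [twistedShift]

lemma twistedShift_mul_castSucc {ι : Type*} (b : R) (Z : Matrix (Fin (k + 1)) ι R) (i : Fin k)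
    (j : ι) : (twistedShift k b * Z) i.castSucc j = Z i.succ j := by
  simp [Matrix.mul_apply, twistedShift_castSucc]

lemma twistedShift_mul_last {ι : Type*} (b : R) (Z : Matrix (Fin (k + 1)) ι R) (j : ι) :
    (twistedShift k b * Z) (Fin.last k) j = b * Z 0 j := by
  simp [Matrix.mul_apply, twistedShift_last]

lemma mul_twistedShift_succ {ι : Type*} (b : R) (Z : Matrix ι (Fin (k + 1)) R) (i : ι)
    (j : Fin k) : (Z * twistedShift k b) i j.succ = Z i j.castSucc := by
  simp [Matrix.mul_apply, Fin.sum_univ_castSucc, twistedShift_castSucc, twistedShift_last]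

lemma mul_twistedShift_zero {ι : Type*} (b : R) (Z : Matrix ι (Fin (k + 1)) R) (i : ι) :
    (Z * twistedShift k b) i 0 = b * Z i (Fin.last k) := by
  simp [Matrix.mul_apply, Fin.sum_univ_castSucc, twistedShift_castSucc, twistedShift_last,
    (Fin.succ_ne_zero _).symm, mul_comm]

lemma twistedShift_trace (b : R) (hk : k ≠ 0) : (twistedShift k b).trace = 0 := by
  obtain ⟨k, rfl⟩ := Nat.exists_eq_succ_of_ne_zero hk
  simp [Matrix.trace, Fin.sum_univ_castSucc (n := k + 1), twistedShift_castSucc,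
    twistedShift_last, Fin.castSucc_lt_succ.ne]

lemma twistedShift_pow_zero_row (b : R) (s j : Fin (k + 1)) :
    (twistedShift k b ^ (s : ℕ)) 0 j = if j = s then 1 else 0 := by
  induction s using Fin.induction generalizing j with
  | zero => simp [Matrix.one_apply, eq_comm]
  | succ s ih =>
    rw [Fin.val_succ, pow_succ]
    induction j using Fin.cases with
    | zero =>
      rw [mul_twistedShift_zero, ← Fin.val_castSucc, ih]
      simp [(Fin.castSucc_lt_last s).ne', (Fin.succ_ne_zero _).symm]
    | succ j =>
      rw [mul_twistedShift_succ, ← Fin.val_castSucc, ih]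
      simp

lemma twistedShift_pow_succ_last_row (b : R) (s j : Fin (k + 1)) :
    (twistedShift k b ^ (s + 1 : ℕ)) (Fin.last k) j = if j = s then b else 0 := by
  rw [pow_succ', twistedShift_mul_last, twistedShift_pow_zero_row]
  simp

lemma twistedShift_pow_trace (b : R) (s : Fin k) :
    (twistedShift k b ^ (s + 1 : ℕ)).trace = 0 := by
  set M := twistedShift k b with hM
  let D : Matrix (Fin (k + 1)) (Fin (k + 1)) R := Matrix.diagonal fun i => (i : R)
  have hD : M * D - D * M = M - ((k + 1 : R) * b) • Matrix.single (Fin.last k) 0 1 := by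
    ext i j
    simp only [D, Matrix.sub_apply, Matrix.mul_diagonal, Matrix.diagonal_mul, Matrix.smul_apply,
      smul_eq_mul, Matrix.single_apply]
    induction i using Fin.lastCases with
    | last =>
      rw [hM, twistedShift_last]
      by_cases h : j = 0
      · simp [h]; ring
      · simp [h, Ne.symm h]
    | cast i =>
      rw [hM, twistedShift_castSucc]
      by_cases h : j = i.succ
      · simp [h, (Fin.castSucc_lt_last i).ne']
      · simp [h, (Fin.castSucc_lt_last i).ne']
  have h0 : (M ^ (s : ℕ) * (M * D - D * M)).trace = 0 := by
    rw [mul_sub, trace_sub, ← mul_assoc, ← mul_assoc, Matrix.trace_mul_comm _ M, ← mul_assoc,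
      ← pow_succ, ← pow_succ', sub_self]
  rw [hD, mul_sub, trace_sub, ← pow_succ, Matrix.mul_smul, trace_smul,
    Matrix.trace_mul_comm, Matrix.trace_single_mul] at h0
  have := twistedShift_pow_zero_row b s.castSucc (Fin.last k)
  rw [Fin.val_castSucc] at this
  rw [hM, this] at h0
  simpa [(Fin.castSucc_lt_last s).ne'] using h0

/-- A matrix orthogonal, for the trace form, to the powers of a twisted shift is a commutator with
that shift. -/
lemma exists_twistedShift_commutator (b : R) (C : Matrix (Fin (k + 1)) (Fin (k + 1)) R)
    (hC : ∀ s : Fin (k + 1), (twistedShift k b ^ (s : ℕ) * C).trace = 0) :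
    ∃ Z, twistedShift k b * Z - Z * twistedShift k b = C := by
  set M := twistedShift k b with hM
  let z : Fin (k + 1) → Fin (k + 1) → R := fun j =>
    Fin.reverseInduction (motive := fun _ => Fin (k + 1) → R) 0
      (fun i x => M *ᵥ x - fun l => C l i.succ) j
  have hz : ∀ i : Fin k, z i.castSucc = M *ᵥ z i.succ - fun l => C l i.succ := by
    intro i; simp [z]
  let Z : Matrix (Fin (k + 1)) (Fin (k + 1)) R := Matrix.of fun i j => z j i
  let D := M * Z - Z * M - C
  have hD : ∀ i (j : Fin k), D i j.succ = 0 := by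
    intro i j
    simp only [D, Matrix.sub_apply, hM, mul_twistedShift_succ]
    simp only [Z, Matrix.of_apply, hz]
    simp [Matrix.mul_apply, Matrix.mulVec, dotProduct, ← hM]
  have htr : ∀ s : Fin (k + 1), (M ^ (s : ℕ) * D).trace = 0 := by
    intro s
    rw [mul_sub, trace_sub, hC, mul_sub, trace_sub, ← mul_assoc, ← mul_assoc,
      Matrix.trace_mul_comm _ M, ← mul_assoc, ← pow_succ, ← pow_succ', sub_self, sub_self]
  have hD0 : ∀ s, D s 0 = 0 := by
    intro s
    have := htr s
    rw [Matrix.trace_mul_comm] at this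
    simpa [Matrix.trace, Matrix.mul_apply, Fin.sum_univ_succ, hD, hM,
      twistedShift_pow_zero_row, Matrix.mul_apply, Finset.sum_comm (γ := Fin (k + 1))] using this
  refine ⟨Z, sub_eq_zero.1 ?_⟩
  ext i j
  induction j using Fin.cases with
  | zero => exact hD0 i
  | succ j => exact hD i j

/-- A row vector `ρ` is cyclic for `X` if no proper subspace contains it and is stable under
right multiplication by `X`. -/
def IsRowCyclic {K ι : Type*} [Field K] [Fintype ι] (X : Matrix ι ι K) (ρ : ι → K) : Prop :=
  ∀ N : Submodule K (ι → K), ρ ∈ N → (∀ x ∈ N, x ᵥ* X ∈ N) → N = ⊤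

/-- The twisted shift bordered by a column `u` on the left and a zero row on top. -/
def borderedShift (b : R) (u : Fin (k + 1) → R) :
    Matrix (Unit ⊕ Fin (k + 1)) (Unit ⊕ Fin (k + 1)) R :=
  Matrix.fromBlocks 0 0 (Matrix.replicateCol Unit u) (twistedShift k b)

lemma borderedShift_map {S : Type*} [CommRing S] (φ : R →+* S) (b : R) (u : Fin (k + 1) → R) :
    (borderedShift b u).map φ = borderedShift (φ b) (φ ∘ u) := by
  ext (i | i) (j | j)
  · simp [borderedShift]
  · simp [borderedShift]
  · simp [borderedShift]
  · induction i using Fin.lastCases with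
    | last => simp [borderedShift, twistedShift_last, apply_ite φ]
    | cast i => simp [borderedShift, twistedShift_castSucc, apply_ite φ]

lemma exists_isRowCyclic_borderedShift {K : Type*} [Field K] (b : K) (u : Fin (k + 1) → K)
    (h : b ≠ 0 ∨ u (Fin.last k) ≠ 0) : ∃ ρ, IsRowCyclic (borderedShift b u) ρ := by
  obtain ⟨c, hc⟩ : ∃ c : K, u (Fin.last k) - b * c ≠ 0 := by
    by_cases hb : b = 0
    · exact ⟨0, by simpa [hb] using h⟩
    · exact ⟨(u (Fin.last k) - 1) / b, by field_simp; simp⟩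
  let e : Unit ⊕ Fin (k + 1) → K := Pi.single (Sum.inl ()) 1
  let r : Fin (k + 1) → Unit ⊕ Fin (k + 1) → K := fun i => Pi.single (Sum.inr i) 1
  have he : e ᵥ* borderedShift b u = 0 := by
    ext (j | j) <;> simp [e, borderedShift]
  have hr : ∀ i : Fin k, r i.castSucc ᵥ* borderedShift b u = u i.castSucc • e + r i.succ := by
    intro i
    ext (j | j) <;> simp [e, r, borderedShift, twistedShift_castSucc, Pi.single_apply]
  have hl : r (Fin.last k) ᵥ* borderedShift b u = u (Fin.last k) • e + b • r 0 := by
    ext (j | j) <;> simp [e, r, borderedShift, twistedShift_last, Pi.single_apply]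
  refine ⟨c • e + r 0, fun N hρ hN => ?_⟩
  have hc' : ∀ i, ∃ c : K, c • e + r i ∈ N := by
    intro i
    induction i using Fin.induction with
    | zero => exact ⟨c, hρ⟩
    | succ i ih =>
      obtain ⟨c', hc'⟩ := ih
      refine ⟨u i.castSucc, ?_⟩
      simpa [add_vecMul, smul_vecMul, he, hr] using hN _ hc'
  have heN : e ∈ N := by
    obtain ⟨c', hc'⟩ := hc' (Fin.last k)
    have h1 := hN _ hc'
    rw [add_vecMul, smul_vecMul, he, hl, smul_zero, zero_add] at h1
    have h2 := N.sub_mem h1 (N.smul_mem b hρ)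
    have h3 : u (Fin.last k) • e + b • r 0 - b • (c • e + r 0)
        = (u (Fin.last k) - b * c) • e := by module
    rw [h3] at h2
    exact (N.smul_mem_iff hc).1 h2
  have hrN : ∀ i, r i ∈ N := by
    intro i
    obtain ⟨c', hc'⟩ := hc' i
    exact (N.add_mem_iff_right (N.smul_mem _ heN)).1 hc'
  rw [eq_top_iff, ← (Pi.basisFun K (Unit ⊕ Fin (k + 1))).span_eq, Submodule.span_le]
  rintro _ ⟨i | i, rfl⟩
  · simpa [e] using heN
  · simpa [r] using hrN i

/-- Bordered shifts realize the trace-zero matrices whose first row is `(a, b, 0, …, 0)` and whose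
off-scalar part is divisible by `b`. -/
lemma exists_borderedShift_commutator (hk : k ≠ 0) (a b : R) (d : Fin (k + 1) → R)
    (B : Matrix (Fin (k + 1)) (Fin (k + 1)) R) (htr : (k + 2) * a + b * B.trace = 0) :
    ∃ (u : Fin (k + 1) → R) (Y W : Matrix (Unit ⊕ Fin (k + 1)) (Unit ⊕ Fin (k + 1)) R),
      u (Fin.last k) = a ∧ (borderedShift b u).trace = 0 ∧ Y.trace = 0 ∧
      borderedShift b u * Y - Y * borderedShift b u =
        a • 1 + b • Matrix.fromBlocks 0 (Matrix.replicateRow Unit (Pi.single 0 1))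
          (Matrix.replicateCol Unit d) B ∧
      borderedShift b u * W = W * borderedShift b u ∧ W.trace = b := by
  set M := twistedShift k b with hM
  let u : Fin (k + 1) → R := Fin.snoc (fun s : Fin k => -(M ^ (s + 1 : ℕ) * B).trace) a
  have hul : u (Fin.last k) = a := by simp [u]
  have huc : ∀ s : Fin k, u s.castSucc = -(M ^ (s + 1 : ℕ) * B).trace := by simp [u]
  let e : Fin (k + 1) → R := Pi.single (Fin.last k) 1
  obtain ⟨Z, hZ⟩ := exists_twistedShift_commutator b (a • 1 + b • B + vecMulVec u e) (by
    intro s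
    rw [← hM, mul_add, mul_add, trace_add, trace_add, Matrix.mul_smul, mul_one, trace_smul,
      Matrix.mul_smul, trace_smul, mul_vecMulVec, trace_vecMulVec]
    induction s using Fin.cases with
    | zero => simp [e, hul]; linear_combination htr
    | succ s =>
      have h := twistedShift_pow_succ_last_row b s.castSucc
      have h' : (M ^ (s + 1 : ℕ) *ᵥ u) ⬝ᵥ e = b * u s.castSucc := by
        rw [Fin.val_castSucc] at h
        rw [dotProduct_single_one, Matrix.mulVec, dotProduct]
        simp [hM, h]
      rw [Fin.val_succ, h', huc, hM, twistedShift_pow_trace]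
      simp)
  rw [← hM] at hZ
  have hZt : a * Z.trace + b * (Z * B).trace + (Z *ᵥ u) (Fin.last k) = 0 := by
    have h : (Z * (M * Z - Z * M)).trace = 0 := by
      rw [mul_sub, trace_sub, Matrix.trace_mul_comm Z (M * Z), mul_assoc, Matrix.trace_mul_comm M,
        mul_assoc, sub_self]
    rw [hZ, mul_add, mul_add, trace_add, trace_add, Matrix.mul_smul, mul_one, trace_smul,
      Matrix.mul_smul, trace_smul, mul_vecMulVec, trace_vecMulVec] at h
    simpa [e] using h
  let t : Fin (k + 1) → R := b • d + Z *ᵥ u + Z.trace • u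
  let v : Fin (k + 1) → R :=
    Fin.cons (d (Fin.last k) - (Z * B).trace) fun i : Fin k => t i.castSucc
  have hv : M * Matrix.replicateCol Unit v = Matrix.replicateCol Unit t := by
    ext i j
    induction i using Fin.lastCases with
    | last =>
      rw [hM, twistedShift_mul_last]
      simp [v, t, hul]
      linear_combination -hZt
    | cast i =>
      rw [hM, twistedShift_mul_castSucc]
      simp [v]
  let w : Fin (k + 1) → R := Fin.cons (-a) fun i : Fin k => -(b * u i.castSucc)
  have hw : M * Matrix.replicateCol Unit w = Matrix.replicateCol Unit (-(b • u)) := by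
    ext i j
    induction i using Fin.lastCases with
    | last =>
      rw [hM, twistedShift_mul_last]
      simp [w, hul]
    | cast i =>
      rw [hM, twistedShift_mul_castSucc]
      simp [w]
  have heM : Matrix.replicateRow Unit (-e) * M = Matrix.replicateRow Unit (Pi.single 0 (-b)) := by
    ext i j
    induction j using Fin.cases with
    | zero =>
      rw [hM, mul_twistedShift_zero]
      simp [e]
    | succ j =>
      rw [hM, mul_twistedShift_succ]
      simp [e, (Fin.castSucc_lt_last j).ne]
  refine ⟨u, fromBlocks (Matrix.of fun _ _ => -Z.trace) (Matrix.replicateRow Unit (-e))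
    (Matrix.replicateCol Unit v) Z, fromBlocks (Matrix.of fun _ _ => b) 0
    (Matrix.replicateCol Unit w) 0, hul, ?_, ?_, ?_, ?_, ?_⟩
  · simp [borderedShift, trace, show ∑ i, twistedShift k b i i = 0 from twistedShift_trace b hk]
  · simp [Matrix.trace]
  · rw [borderedShift, ← hM, fromBlocks_multiply, fromBlocks_multiply, hv, heM,
      ← fromBlocks_one, fromBlocks_smul, fromBlocks_smul, fromBlocks_add, sub_eq_add_neg,
      fromBlocks_neg, fromBlocks_add, fromBlocks_inj]
    refine ⟨?_, ?_, ?_, ?_⟩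
    · ext i j
      simp [Matrix.mul_apply, e, hul, Pi.single_apply]
    · ext i j
      by_cases hj : j = 0 <;> simp [hj]
    · ext i j
      simp [Matrix.mul_apply, t, Matrix.mulVec, dotProduct]
      ring
    · have : replicateCol Unit u * replicateRow Unit (-e) = - vecMulVec u e := by
        ext i j
        simp [Matrix.mul_apply, vecMulVec_apply]
      rw [this, sub_eq_iff_eq_add.1 hZ]
      simp only [Matrix.mul_zero]
      abel
  · rw [borderedShift, ← hM, fromBlocks_multiply, fromBlocks_multiply, hw]
    have : replicateCol Unit u * (Matrix.of fun _ _ => b : Matrix Unit Unit R) =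
        replicateCol Unit (b • u) := by
      ext i j
      rw [Matrix.mul_apply]
      simp [mul_comm]
    rw [this]
    ext (i | i) (j | j) <;> simp
  · simp [Matrix.trace]

/-- No value `w ⬝ᵥ A *ᵥ v` with `w ⬝ᵥ v = 0` is a proper divisor of `g`. -/
def IsMaximalValue {ι : Type*} [Fintype ι] (A : Matrix ι ι R) (g : R) : Prop :=
  ∀ w v : ι → R, w ⬝ᵥ v = 0 → w ⬝ᵥ A *ᵥ v ∣ g → g ∣ w ⬝ᵥ A *ᵥ v

lemma IsMaximalValue.transpose {ι : Type*} [Fintype ι] {A : Matrix ι ι R} {g : R}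
    (h : IsMaximalValue A g) : IsMaximalValue Aᵀ g := by
  intro w v hwv
  rw [dotProduct_transpose_mulVec]
  exact h v w (by rwa [dotProduct_comm])

lemma IsMaximalValue.dvd [IsPrincipalIdealRing R] {ι : Type*} [Fintype ι] {A : Matrix ι ι R}
    {g : R} (hg : IsMaximalValue A g) {w v v' : ι → R} (hv : w ⬝ᵥ v = 0) (hv' : w ⬝ᵥ v' = 0)
    (hmem : g ∈ Ideal.span {w ⬝ᵥ A *ᵥ v, w ⬝ᵥ A *ᵥ v'}) : g ∣ w ⬝ᵥ A *ᵥ v' := by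
  obtain ⟨h, hh⟩ := IsPrincipalIdealRing.principal (Ideal.span {w ⬝ᵥ A *ᵥ v, w ⬝ᵥ A *ᵥ v'})
  rw [Ideal.submodule_span_eq] at hh
  obtain ⟨α, β, hαβ⟩ := Ideal.mem_span_pair.1 (hh ▸ Ideal.mem_span_singleton_self h)
  have hB : w ⬝ᵥ A *ᵥ (α • v + β • v') = h := by
    rw [mulVec_add, mulVec_smul, mulVec_smul, dotProduct_add, dotProduct_smul, dotProduct_smul,
      ← hαβ, smul_eq_mul, smul_eq_mul]
  have hdvd := hg w (α • v + β • v') (by simp [hv, hv'])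
  rw [hB, ← Ideal.mem_span_singleton, ← hh] at hdvd
  have h1 : w ⬝ᵥ A *ᵥ v' ∈ Ideal.span {h} := hh ▸ Ideal.subset_span (by simp)
  exact (hdvd hmem).trans (Ideal.mem_span_singleton.1 h1)

lemma IsMaximalValue.dvd_of_eq [IsPrincipalIdealRing R] {ι : Type*} [Fintype ι]
    {A : Matrix ι ι R} {g : R} (hg : IsMaximalValue A g) {w v v' : ι → R} (hv : w ⬝ᵥ v = 0)
    (hv' : w ⬝ᵥ v' = 0) (hval : w ⬝ᵥ A *ᵥ v = g) : g ∣ w ⬝ᵥ A *ᵥ v' :=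
  hg.dvd hv hv' (Ideal.subset_span (by simp [hval]))

lemma IsMaximalValue.dvd_of_eq_left [IsPrincipalIdealRing R] {ι : Type*} [Fintype ι]
    {A : Matrix ι ι R} {g : R} (hg : IsMaximalValue A g) {w w' v : ι → R} (hw : w ⬝ᵥ v = 0)
    (hw' : w' ⬝ᵥ v = 0) (hval : w ⬝ᵥ A *ᵥ v = g) : g ∣ w' ⬝ᵥ A *ᵥ v := by
  rw [← dotProduct_transpose_mulVec] at hval ⊢
  rw [dotProduct_comm] at hw hw'
  exact hg.transpose.dvd_of_eq hw hw' hval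

/-- If `A i₀ i₁` is a maximal value of `A` lying in a maximal ideal `p`, then the row `i₀` and
the rows with index other than `i₁` agree with those of a scalar matrix modulo `p`. -/
lemma IsMaximalValue.rows_mem [IsPrincipalIdealRing R] {ι : Type*} [Fintype ι] [DecidableEq ι]
    {A : Matrix ι ι R} {i₀ i₁ : ι} (h₀₁ : i₀ ≠ i₁) (hg : IsMaximalValue A (A i₀ i₁))
    (p : Ideal R) [p.IsMaximal] (hp : A i₀ i₁ ∈ p) :
    (∀ j, j ≠ i₀ → A i₀ j ∈ p) ∧
    ∀ j, j ≠ i₀ → j ≠ i₁ → A i₀ i₀ - A j j ∈ p ∧ A j i₀ ∈ p ∧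
      ∀ k, k ≠ i₀ → k ≠ i₁ → k ≠ j → A j k ∈ p := by
  obtain ⟨π, hπ⟩ := IsPrincipalIdealRing.principal p
  rw [Ideal.submodule_span_eq] at hπ
  have hcol' : ∀ (x : R), x = 1 ∨ x = π → ∀ w v v' : ι → R, w ⬝ᵥ v = 0 → w ⬝ᵥ v' = 0 →
      w ⬝ᵥ A *ᵥ v = x * A i₀ i₁ → w ⬝ᵥ A *ᵥ v' ∈ p := by
    intro x hx w v v' hv hv' hxg
    by_contra hnot
    refine hnot (Ideal.mem_of_dvd _ (hg.dvd hv hv' (Ideal.mem_span_pair.2 ?_)) hp)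
    rcases hx with rfl | rfl
    · exact ⟨1, 0, by simp [hxg]⟩
    · obtain ⟨y, z, hz, hyz⟩ := Ideal.IsMaximal.exists_inv ‹p.IsMaximal› hnot
      rw [hπ, Ideal.mem_span_singleton] at hz
      obtain ⟨c, rfl⟩ := hz
      exact ⟨c, y * A i₀ i₁, by rw [hxg]; linear_combination A i₀ i₁ * hyz⟩
  have hrow : ∀ j, j ≠ i₀ → A i₀ j ∈ p := by
    intro j hj
    simpa using hcol' 1 (.inl rfl) (Pi.single i₀ 1) (Pi.single i₁ 1) (Pi.single j 1)
      (by simp [h₀₁]) (by simp [hj.symm]) (by simp)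
  have hcolumn : ∀ j, j ≠ i₁ → A i₀ i₁ ∣ A j i₁ := by
    intro j hj
    simpa using hg.dvd_of_eq_left (w := Pi.single i₀ 1) (w' := Pi.single j 1)
      (v := Pi.single i₁ 1) (by simp [h₀₁]) (by simp [hj]) (by simp)
  refine ⟨hrow, ?_⟩
  intro j hj₀ hj₁
  obtain ⟨β, hβ⟩ := hcolumn j hj₁
  have hval : ∀ x, ((x - β) • Pi.single i₀ 1 + Pi.single j 1) ⬝ᵥ A *ᵥ Pi.single i₁ 1
      = x * A i₀ i₁ := by
    intro x
    simp [add_dotProduct, hβ]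
    ring
  have hdiag : ∀ x, x = 1 ∨ x = π → (x - β) * (A i₀ i₀ - A j j) + A j i₀ ∈ p := by
    intro x hx
    have := hcol' x hx _ (Pi.single i₁ 1) (Pi.single i₀ 1 - (x - β) • Pi.single j 1)
      (by simp [h₀₁, hj₁]) (by simp [hj₀, hj₀.symm]) (hval x)
    have h2 := p.add_mem this (p.mul_mem_left ((x - β) ^ 2) (hrow j hj₀))
    convert h2 using 1
    simp [add_dotProduct, mulVec_sub, mulVec_smul]
    ring
  have h1 := hdiag 1 (.inl rfl)
  have h2 := hdiag π (.inr rfl)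
  have hπp : π ∈ p := hπ ▸ Ideal.mem_span_singleton_self π
  have h3 : A i₀ i₀ - A j j ∈ p := by
    have := p.add_mem (p.sub_mem h1 h2) (p.mul_mem_right (A i₀ i₀ - A j j) hπp)
    convert this using 1
    ring
  refine ⟨h3, ?_, fun k hk₀ hk₁ hkj => ?_⟩
  · have := p.sub_mem h1 (p.mul_mem_left (1 - β) h3)
    convert this using 1
    ring
  · have := hcol' 1 (.inl rfl) _ (Pi.single i₁ 1) (Pi.single k 1)
      (by simp [h₀₁, hj₁]) (by simp [hk₀.symm, hkj.symm])
      (hval 1)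
    have h4 := p.sub_mem this (p.mul_mem_left (1 - β) (hrow k hk₀))
    convert h4 using 1
    simp [add_dotProduct]

/-- In size at least three, a matrix with a maximal value `A i₀ i₁` in a maximal ideal `p` is scalar
modulo `p`. -/
lemma IsMaximalValue.scalar_mem [IsPrincipalIdealRing R] {ι : Type*} [Fintype ι] [DecidableEq ι]
    {A : Matrix ι ι R} {i₀ i₁ i₂ : ι} (h₀₁ : i₀ ≠ i₁) (h₂₀ : i₂ ≠ i₀) (h₂₁ : i₂ ≠ i₁)
    (hg : IsMaximalValue A (A i₀ i₁)) (p : Ideal R) [p.IsMaximal] (hp : A i₀ i₁ ∈ p) (i j : ι) :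
    A i j - (A i₀ i₀ • (1 : Matrix ι ι R)) i j ∈ p := by
  obtain ⟨hrow, hrest⟩ := hg.rows_mem h₀₁ p hp
  have hgT : IsMaximalValue Aᵀ (Aᵀ i₁ i₀) := hg.transpose
  obtain ⟨hrow', hrest'⟩ := hgT.rows_mem h₀₁.symm p hp
  simp only [Matrix.transpose_apply] at hrow' hrest'
  have h11 : A i₀ i₀ - A i₁ i₁ ∈ p := by
    simpa using p.sub_mem (hrest i₂ h₂₀ h₂₁).1 (hrest' i₂ h₂₁ h₂₀).1
  have h10 : A i₁ i₀ ∈ p := by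
    obtain ⟨β, hβ⟩ : A i₀ i₁ ∣ A i₂ i₁ := by
      simpa using hg.dvd_of_eq_left (w := Pi.single i₀ 1) (w' := Pi.single i₂ 1)
        (v := Pi.single i₁ 1) (by simp [h₀₁]) (by simp [h₂₁]) (by simp)
    let w : ι → R := (1 - β) • Pi.single i₀ 1 + Pi.single i₂ 1
    let u : ι → R := Pi.single i₀ 1 - (1 - β) • Pi.single i₂ 1
    have hw : w ⬝ᵥ A *ᵥ Pi.single i₁ 1 = A i₀ i₁ := by
      simp [w, add_dotProduct, hβ]
      ring
    have hwv : w ⬝ᵥ Pi.single i₁ 1 = 0 := by simp [w, h₀₁, h₂₁]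
    have hwu : w ⬝ᵥ u = 0 := by simp [w, u, h₂₀, h₂₀.symm]
    obtain ⟨γ, hγ⟩ := hg.dvd_of_eq hwv hwu hw
    have hval : w ⬝ᵥ A *ᵥ ((1 - γ) • Pi.single i₁ 1 + u) = A i₀ i₁ := by
      rw [mulVec_add, mulVec_smul, dotProduct_add, dotProduct_smul, hw, hγ, smul_eq_mul]
      ring
    have hmem := p.mem_of_dvd (hg.dvd_of_eq_left (w' := Pi.single i₁ 1 - (1 - γ) • Pi.single i₀ 1)
      (by rw [dotProduct_add, dotProduct_smul, hwv, hwu]; simp)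
      (by simp [u, h₀₁, h₀₁.symm, h₂₀, h₂₁]) hval) hp
    have h12 := (hrest' i₂ h₂₁ h₂₀).2.1
    have h02 := hrow i₂ h₂₀
    rw [← Ideal.Quotient.eq_zero_iff_mem] at hmem h12 h02 h11 hp ⊢
    simp [u, mulVec_add, mulVec_sub, mulVec_smul, sub_dotProduct] at hmem h11
    rw [h12, h02, hp] at hmem
    linear_combination hmem + (1 - Ideal.Quotient.mk p γ) * h11
  by_cases hij : i = j
  · subst hij
    simp only [Matrix.smul_apply, Matrix.one_apply_eq, smul_eq_mul, mul_one]
    by_cases hi₀ : i = i₀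
    · simp [hi₀]
    rw [← neg_mem_iff, neg_sub]
    by_cases hi₁ : i = i₁
    · rwa [hi₁]
    · exact (hrest i hi₀ hi₁).1
  · simp only [Matrix.smul_apply, Matrix.one_apply_ne hij, smul_zero, sub_zero]
    by_cases hi₀ : i = i₀
    · subst hi₀
      exact hrow j (Ne.symm hij)
    by_cases hj₁ : j = i₁
    · subst hj₁
      exact hrow' i hij
    by_cases hi₁ : i = i₁
    · subst hi₁
      by_cases hj₀ : j = i₀
      · rwa [hj₀]
      · exact (hrest' j hj₁ hj₀).2.1
    by_cases hj₀ : j = i₀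
    · subst hj₀
      exact (hrest i hi₀ hi₁).2.1
    · exact (hrest i hi₀ hi₁).2.2 j hj₀ hj₁ (Ne.symm hij)

/-- Two vectors `t₁`, `t₂` with dual functionals `w₁`, `w₂` extend to a basis. -/
lemma exists_matrix_of_dual_pair [IsDomain R] [IsPrincipalIdealRing R] {κ ι : Type*} [Fintype κ]
    [DecidableEq κ] [Fintype ι] [DecidableEq ι] (hcard : Fintype.card κ = Fintype.card ι)
    {i₀ i₁ : ι} (h₀₁ : i₀ ≠ i₁) {w₁ w₂ t₁ t₂ : κ → R} (h11 : w₁ ⬝ᵥ t₁ = 1) (h12 : w₁ ⬝ᵥ t₂ = 0)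
    (h21 : w₂ ⬝ᵥ t₁ = 0) (h22 : w₂ ⬝ᵥ t₂ = 1) :
    ∃ (P : Matrix ι κ R) (Q : Matrix κ ι R), P * Q = 1 ∧ Q * P = 1 ∧
      P i₀ = w₁ ∧ P i₁ = w₂ ∧ Q.col i₀ = t₁ ∧ Q.col i₁ = t₂ := by
  let f : (κ → R) →ₗ[R] R × R := (dotProductBilin R R w₁).prod (dotProductBilin R R w₂)
  have hf : ∀ x, f x = (w₁ ⬝ᵥ x, w₂ ⬝ᵥ x) := fun x => rfl
  have hfs : LinearMap.range f = ⊤ := by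
    rw [LinearMap.range_eq_top]
    intro ⟨x, y⟩
    exact ⟨x • t₁ + y • t₂, by simp [hf, h11, h12, h21, h22]⟩
  have hN : Module.finrank R (LinearMap.ker f) = Fintype.card {i : ι // i ≠ i₀ ∧ i ≠ i₁} := by
    have h := Submodule.finrank_quotient_add_finrank (LinearMap.ker f)
    rw [f.quotKerEquivRange.finrank_eq, hfs, finrank_top, Module.finrank_prod,
      Module.finrank_self, Module.finrank_fintype_fun_eq_card, hcard] at h
    have h2 : Fintype.card {i : ι // i ≠ i₀ ∧ i ≠ i₁} + 2 = Fintype.card ι := by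
      rw [Fintype.card_subtype]
      have : Finset.univ.filter (fun i : ι => i ≠ i₀ ∧ i ≠ i₁) = ({i₀, i₁} : Finset ι)ᶜ := by
        ext; simp
      rw [this, ← Finset.card_pair h₀₁, Finset.card_compl_add_card]
    omega
  let g : LinearMap.ker f ≃ₗ[R] ({i : ι // i ≠ i₀ ∧ i ≠ i₁} → R) :=
    LinearEquiv.ofFinrankEq _ _ (by rw [hN, Module.finrank_fintype_fun_eq_card])
  let π : (κ → R) →ₗ[R] LinearMap.ker f := LinearMap.codRestrict _
    (LinearMap.id - ((dotProductBilin R R w₁).smulRight t₁ + (dotProductBilin R R w₂).smulRight t₂))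
    (fun x => by simp [hf, h11, h12, h21, h22])
  have hπ : ∀ x, (π x : κ → R) = x - ((w₁ ⬝ᵥ x) • t₁ + (w₂ ⬝ᵥ x) • t₂) := fun x => rfl
  have hker : ∀ x : LinearMap.ker f, w₁ ⬝ᵥ (x : κ → R) = 0 ∧ w₂ ⬝ᵥ (x : κ → R) = 0 := fun x => by
    have h := x.2
    rw [LinearMap.mem_ker, hf, Prod.mk_eq_zero] at h
    exact h
  let F : (κ → R) →ₗ[R] (ι → R) := LinearMap.pi fun i =>
    if h : i ≠ i₀ ∧ i ≠ i₁ then LinearMap.proj ⟨i, h⟩ ∘ₗ g.toLinearMap ∘ₗ π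
    else if i = i₀ then dotProductBilin R R w₁ else dotProductBilin R R w₂
  let G : (ι → R) →ₗ[R] (κ → R) :=
    (LinearMap.proj i₀).smulRight t₁ + (LinearMap.proj i₁).smulRight t₂ +
      (LinearMap.ker f).subtype ∘ₗ g.symm.toLinearMap ∘ₗ LinearMap.funLeft R R Subtype.val
  have hF₀ : ∀ x, F x i₀ = w₁ ⬝ᵥ x := fun x => by simp [F]
  have hF₁ : ∀ x, F x i₁ = w₂ ⬝ᵥ x := fun x => by simp [F, h₀₁.symm]
  have hF : ∀ x (i : {i : ι // i ≠ i₀ ∧ i ≠ i₁}), F x i = g (π x) i := fun x i => by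
    simp [F, i.2.1, i.2.2]
  have hG : ∀ y, G y = y i₀ • t₁ + y i₁ • t₂ + (g.symm (fun i => y i) : κ → R) := fun y => rfl
  have hGF : G ∘ₗ F = LinearMap.id := by
    refine LinearMap.ext fun x => ?_
    have : (fun i : {i : ι // i ≠ i₀ ∧ i ≠ i₁} => F x i) = g (π x) := funext (hF x)
    rw [LinearMap.comp_apply, hG, hF₀, hF₁, this, g.symm_apply_apply, hπ]
    simp
  have hFG : F ∘ₗ G = LinearMap.id := by
    refine LinearMap.ext fun y => ?_
    have hw₁ : w₁ ⬝ᵥ G y = y i₀ := by simp [hG, h11, h12, (hker _).1]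
    have hw₂ : w₂ ⬝ᵥ G y = y i₁ := by simp [hG, h21, h22, (hker _).2]
    ext i
    rw [LinearMap.comp_apply, LinearMap.id_apply]
    by_cases h : i ≠ i₀ ∧ i ≠ i₁
    · have hp : π (G y) = g.symm (fun i => y i) := by
        ext1
        rw [hπ, hw₁, hw₂, hG, add_sub_cancel_left]
      rw [hF (G y) ⟨i, h⟩, hp, g.apply_symm_apply]
    · by_cases h0 : i = i₀
      · rw [h0, hF₀, hw₁]
      · have h1 : i = i₁ := by tauto
        rw [h1, hF₁, hw₂]
  refine ⟨LinearMap.toMatrix' F, LinearMap.toMatrix' G, ?_, ?_, ?_, ?_, ?_, ?_⟩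
  · rw [← LinearMap.toMatrix'_comp, hFG, LinearMap.toMatrix'_id]
  · rw [← LinearMap.toMatrix'_comp, hGF, LinearMap.toMatrix'_id]
  · ext j
    simp [LinearMap.toMatrix'_apply, hF₀]
  · ext j
    simp [LinearMap.toMatrix'_apply, hF₁]
  · have : (fun i : {i : ι // i ≠ i₀ ∧ i ≠ i₁} => (Pi.single i₀ 1 : ι → R) i) = 0 := by
      ext i; simp [i.2.1]
    ext j
    simp [LinearMap.toMatrix'_apply, hG, this, h₀₁.symm]
  · have : (fun i : {i : ι // i ≠ i₀ ∧ i ≠ i₁} => (Pi.single i₁ 1 : ι → R) i) = 0 := by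
      ext i; simp [i.2.2]
    ext j
    simp [LinearMap.toMatrix'_apply, hG, this, h₀₁]

/-- A nonzero vector over a principal ideal domain is a multiple of a unimodular one. -/
lemma exists_smul_unimodular [IsDomain R] [IsPrincipalIdealRing R] {κ : Type*} [Fintype κ]
    {w : κ → R} (hw : w ≠ 0) :
    ∃ (c : R) (w₀ t : κ → R), c ≠ 0 ∧ w = c • w₀ ∧ w₀ ⬝ᵥ t = 1 := by
  obtain ⟨c, hc⟩ := IsPrincipalIdealRing.principal (Ideal.span (Set.range w))
  rw [Ideal.submodule_span_eq] at hc
  have hdvd : ∀ i, c ∣ w i := fun i => by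
    rw [← Ideal.mem_span_singleton, ← hc]
    exact Ideal.subset_span ⟨i, rfl⟩
  choose w₀ hw₀ using hdvd
  have hw' : w = c • w₀ := funext hw₀
  have hc0 : c ≠ 0 := by
    rintro rfl
    exact hw (by simpa using hw')
  obtain ⟨t, ht⟩ := Ideal.mem_span_range_iff_exists_fun.1 (hc ▸ Ideal.mem_span_singleton_self c)
  refine ⟨c, w₀, t, hc0, hw', mul_left_cancel₀ hc0 ?_⟩
  rw [mul_one, ← smul_eq_mul, ← smul_dotProduct, ← hw']
  rw [dotProduct_comm]
  exact ht

/-- A matrix of size at least three that is not scalar modulo any maximal ideal takes the value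
`1` on some pair of orthogonal vectors. -/
lemma exists_dotProduct_mulVec_eq_one [IsDomain R] [IsPrincipalIdealRing R] {κ : Type*}
    [Fintype κ] [DecidableEq κ] (A : Matrix κ κ R) {i₀ i₁ i₂ : κ} (h₀₁ : i₀ ≠ i₁)
    (h₂₀ : i₂ ≠ i₀) (h₂₁ : i₂ ≠ i₁)
    (hA : ∀ p : Ideal R, p.IsMaximal →
      ¬∃ c : R ⧸ p, A.map (Ideal.Quotient.mk p) = c • (1 : Matrix κ κ (R ⧸ p))) :
    ∃ w v, w ⬝ᵥ v = 0 ∧ w ⬝ᵥ A *ᵥ v = 1 := by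
  obtain ⟨w, v, hwv, hmax⟩ : ∃ w v, w ⬝ᵥ v = 0 ∧ IsMaximalValue A (w ⬝ᵥ A *ᵥ v) := by
    obtain ⟨I, ⟨w, v, hwv, rfl⟩, hI⟩ := set_has_maximal_iff_noetherian.2
      (inferInstance : IsNoetherian R R)
      {I | ∃ w v : κ → R, w ⬝ᵥ v = 0 ∧ I = Ideal.span {w ⬝ᵥ A *ᵥ v}} ⟨_, 0, 0, by simp, rfl⟩
    refine ⟨w, v, hwv, fun w' v' hwv' hdvd => ?_⟩
    by_contra hnot
    refine hI _ ⟨w', v', hwv', rfl⟩ ?_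
    rw [lt_iff_le_not_ge, Ideal.span_singleton_le_span_singleton,
      Ideal.span_singleton_le_span_singleton]
    exact ⟨hdvd, hnot⟩
  obtain ⟨w, v, hwv, hmax, ⟨t, ht⟩, s, hs⟩ : ∃ w v, w ⬝ᵥ v = 0 ∧
      IsMaximalValue A (w ⬝ᵥ A *ᵥ v) ∧ (∃ t, w ⬝ᵥ t = 1) ∧ ∃ s, s ⬝ᵥ v = 1 := by
    by_cases h0 : w ⬝ᵥ A *ᵥ v = 0
    · refine ⟨Pi.single i₀ 1, Pi.single i₁ 1, by simp [h₀₁], ?_, ⟨Pi.single i₀ 1, by simp⟩,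
        ⟨Pi.single i₁ 1, by simp⟩⟩
      have := hmax (Pi.single i₀ 1) (Pi.single i₁ 1) (by simp [h₀₁]) (by rw [h0]; exact dvd_zero _)
      rw [h0, zero_dvd_iff] at this
      rwa [this, ← h0]
    · obtain ⟨c, w₀, t, hc, rfl, ht⟩ := exists_smul_unimodular (w := w)
        (by rintro rfl; simp at h0)
      obtain ⟨c', v₀, s, hc', rfl, hs⟩ := exists_smul_unimodular (w := v)
        (by rintro rfl; simp at h0)
      have hwv₀ : w₀ ⬝ᵥ v₀ = 0 := by simpa [hc, hc'] using hwv
      have hdvd : w₀ ⬝ᵥ A *ᵥ v₀ ∣ (c • w₀) ⬝ᵥ A *ᵥ (c' • v₀) :=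
        ⟨c * c', by simp [mulVec_smul]; ring⟩
      refine ⟨w₀, v₀, hwv₀, fun w' v' hwv' h' => ?_, ⟨t, ht⟩, ⟨s, by rwa [dotProduct_comm]⟩⟩
      exact hdvd.trans (hmax w' v' hwv' (h'.trans hdvd))
  by_cases hu : IsUnit (w ⬝ᵥ A *ᵥ v)
  · obtain ⟨c, hc⟩ := hu.exists_left_inv
    exact ⟨w, c • v, by simp [hwv], by simpa [mulVec_smul] using hc⟩
  exfalso
  obtain ⟨p, hp, hgp⟩ := exists_max_ideal_of_mem_nonunits hu
  obtain ⟨P, Q, hPQ, hQP, hP₀, -, -, hQ₁⟩ := exists_matrix_of_dual_pair (κ := κ) (ι := κ) rfl h₀₁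
    (w₁ := w) (w₂ := s - (s ⬝ᵥ t) • w) (t₁ := t) (t₂ := v) ht hwv (by simp [sub_dotProduct, ht])
    (by simp [sub_dotProduct, hs, hwv])
  have hentry : (P * A * Q) i₀ i₁ = w ⬝ᵥ A *ᵥ v := by
    rw [← hP₀, ← hQ₁, mul_assoc, Matrix.mul_apply]
    simp [dotProduct, Matrix.mulVec, Matrix.mul_apply]
  have hmax' : IsMaximalValue (P * A * Q) ((P * A * Q) i₀ i₁) := by
    rw [hentry]
    intro w' v' hwv'
    have h1 : w' ⬝ᵥ (P * A * Q) *ᵥ v' = (w' ᵥ* P) ⬝ᵥ A *ᵥ (Q *ᵥ v') := by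
      rw [← dotProduct_mulVec, mulVec_mulVec, mulVec_mulVec, mul_assoc]
    rw [h1]
    exact hmax _ _ (by rw [← dotProduct_mulVec, mulVec_mulVec, hPQ, one_mulVec, hwv'])
  have hmem := hmax'.scalar_mem h₀₁ h₂₀ h₂₁ p (hentry ▸ hgp)
  set c := (P * A * Q) i₀ i₀
  refine hA p hp ⟨Ideal.Quotient.mk p c, ?_⟩
  have h1 : (P * A * Q).map (Ideal.Quotient.mk p) =
      (c • (1 : Matrix κ κ R)).map (Ideal.Quotient.mk p) := by
    ext i j
    exact Ideal.Quotient.eq.2 (hmem i j)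
  have h2 : A = Q * (P * A * Q) * P := by
    rw [← mul_assoc, ← mul_assoc, hQP, one_mul, mul_assoc, hQP, mul_one]
  rw [h2, Matrix.map_mul, Matrix.map_mul, h1, ← Matrix.map_mul, ← Matrix.map_mul,
    Matrix.mul_smul, Matrix.smul_mul, mul_one, hQP]
  ext i j
  by_cases h : i = j <;> simp [h]

/-- Cyclicity of a row vector is preserved by conjugation. -/
lemma IsRowCyclic.conj {K ι κ : Type*} [Field K] [Fintype ι] [Fintype κ] [DecidableEq ι]
    [DecidableEq κ] {X : Matrix ι ι K} {ρ : ι → K} (h : IsRowCyclic X ρ) {P : Matrix ι κ K}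
    {Q : Matrix κ ι K} (hPQ : P * Q = 1) (hQP : Q * P = 1) :
    IsRowCyclic (Q * X * P) (ρ ᵥ* P) := by
  intro N hρ hN
  have h' : N.comap (vecMulLinear P) = ⊤ := by
    refine h _ hρ fun x hx => ?_
    have hx' := hN _ hx
    rw [vecMulLinear_apply, vecMul_vecMul, Matrix.mul_assoc, ← Matrix.mul_assoc P Q, hPQ,
      Matrix.one_mul, ← vecMul_vecMul] at hx'
    exact hx'
  refine (Submodule.eq_top_iff').2 fun y => ?_
  have hy : y ᵥ* Q ∈ N.comap (vecMulLinear P) := h' ▸ Submodule.mem_top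
  rwa [Submodule.mem_comap, vecMulLinear_apply, vecMul_vecMul, hQP, vecMul_one] at hy

/-- Evaluation at a cyclic row vector identifies the centralizer with the space of row vectors. -/
lemma IsRowCyclic.finrank_glCent {K : Type*} [Field K] {n : ℕ} {X : Matrix (Fin n) (Fin n) K}
    {ρ : Fin n → K} (h : IsRowCyclic X ρ) : Module.finrank K (glCent X) = n := by
  let f : glCent X →ₗ[K] (Fin n → K) :=
    { toFun := fun W => ρ ᵥ* W.1
      map_add' := fun W W' => vecMul_add _ _ _
      map_smul' := fun c W => vecMul_smul _ _ _ }
  have hinj : Function.Injective f := by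
    rw [injective_iff_map_eq_zero]
    intro W hW
    have hWX : X * W.1 = W.1 * X := W.2
    have hker : LinearMap.ker (vecMulLinear W.1) = ⊤ := by
      refine h _ hW fun x hx => ?_
      rw [LinearMap.mem_ker, vecMulLinear_apply] at hx ⊢
      rw [vecMul_vecMul, hWX, ← vecMul_vecMul, hx, zero_vecMul]
    ext i j
    have hi : Pi.single i 1 ᵥ* W.1 = 0 := by
      rw [← vecMulLinear_apply, ← LinearMap.mem_ker, hker]
      exact Submodule.mem_top
    simpa using congrFun hi j
  have hsurj : LinearMap.range f = ⊤ := by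
    refine h _ ⟨⟨1, by simp [glCent]⟩, vecMul_one _⟩ ?_
    rintro _ ⟨⟨W, hW⟩, rfl⟩
    have hW' : X * W = W * X := hW
    refine ⟨⟨W * X, ?_⟩, ?_⟩
    · change X * (W * X) = W * X * X
      rw [← Matrix.mul_assoc, hW']
    · exact (vecMul_vecMul ρ W X).symm
  rw [(LinearEquiv.ofBijective f ⟨hinj, LinearMap.range_eq_top.1 hsurj⟩).finrank_eq,
    Module.finrank_fin_fun]

lemma finrank_slCent_add_one {K : Type*} [Field K] {n : ℕ} {X W : Matrix (Fin n) (Fin n) K}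
    (hW : X * W = W * X) (htr : W.trace ≠ 0) :
    Module.finrank K (slCent X) + 1 = Module.finrank K (glCent X) := by
  let f : glCent X →ₗ[K] K := traceLinearMap (Fin n) K K ∘ₗ (glCent X).subtype
  have hf : LinearMap.range f = ⊤ := by
    rw [LinearMap.range_eq_top]
    intro c
    refine ⟨(c / W.trace) • ⟨W, hW⟩, ?_⟩
    simp [f, htr]
  have hker : (LinearMap.ker f).map (glCent X).subtype = slCent X := by
    ext Z
    constructor
    · rintro ⟨Z, hZ, rfl⟩
      exact ⟨hZ, Z.2⟩
    · rintro ⟨hZ, hXZ⟩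
      exact ⟨⟨Z, hXZ⟩, hZ, rfl⟩
  have hinj : Function.Injective (glCent X).subtype := (glCent X).subtype_injective
  rw [← hker, ← ((LinearMap.ker f).equivMapOfInjective _ hinj).finrank_eq,
    ← f.finrank_range_add_finrank_ker, hf, finrank_top, Module.finrank_self, add_comm]

/-- A matrix that is not scalar modulo any maximal ideal is conjugate to one whose first row is
`(α, 1, 0, …, 0)`. -/
lemma exists_conj_fromBlocks [IsDomain R] [IsPrincipalIdealRing R] (hk : k ≠ 0)
    (A : Matrix (Fin (k + 2)) (Fin (k + 2)) R)
    (hA : ∀ p : Ideal R, p.IsMaximal → ¬∃ c : R ⧸ p,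
      A.map (Ideal.Quotient.mk p) = c • (1 : Matrix (Fin (k + 2)) (Fin (k + 2)) (R ⧸ p))) :
    ∃ (P : Matrix (Unit ⊕ Fin (k + 1)) (Fin (k + 2)) R)
      (Q : Matrix (Fin (k + 2)) (Unit ⊕ Fin (k + 1)) R) (α : R) (d : Fin (k + 1) → R)
      (B : Matrix (Fin (k + 1)) (Fin (k + 1)) R), P * Q = 1 ∧ Q * P = 1 ∧
      A = Q * (α • 1 + fromBlocks 0 (replicateRow Unit (Pi.single 0 1)) (replicateCol Unit d) B)
        * P := by
  obtain ⟨k, rfl⟩ := Nat.exists_eq_succ_of_ne_zero hk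
  obtain ⟨w, v, hwv, hwAv⟩ := exists_dotProduct_mulVec_eq_one A (i₀ := 0) (i₁ := 1) (i₂ := 2)
    (Fin.ne_of_val_ne (by simp))
    (Fin.ne_of_val_ne (by simp [Nat.mod_eq_of_lt])) (Fin.ne_of_val_ne (by simp [Nat.mod_eq_of_lt]))
    hA
  set t := A *ᵥ v with ht
  obtain ⟨α, hα⟩ : ∃ α, α = w ⬝ᵥ A *ᵥ t := ⟨_, rfl⟩
  obtain ⟨P, Q, hPQ, hQP, hP₀, hP₁, -, -⟩ := exists_matrix_of_dual_pair
    (κ := Fin (k + 1 + 2)) (ι := Unit ⊕ Fin (k + 1 + 1)) (i₀ := Sum.inl ()) (i₁ := Sum.inr 0)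
    (by simp; omega) (by simp) (w₁ := w) (w₂ := w ᵥ* A - α • w) (t₁ := t) (t₂ := v) hwAv hwv
    (by simp [sub_dotProduct, ← dotProduct_mulVec, hwAv, hα])
    (by simp [sub_dotProduct, ← dotProduct_mulVec, hwAv, hwv, ← ht])
  have hrow : (P * A * Q) (Sum.inl ()) =
      α • (1 : Matrix (Unit ⊕ Fin (k + 1 + 1)) (Unit ⊕ Fin (k + 1 + 1)) R) (Sum.inl ()) +
        (1 : Matrix (Unit ⊕ Fin (k + 1 + 1)) (Unit ⊕ Fin (k + 1 + 1)) R) (Sum.inr 0) := by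
    rw [mul_apply_eq_vecMul, mul_apply_eq_vecMul, hP₀, ← hPQ, mul_apply_eq_vecMul,
      mul_apply_eq_vecMul, hP₀, hP₁, ← smul_vecMul, ← add_vecMul, add_sub_cancel]
  refine ⟨P, Q, α, fun i => (P * A * Q) (Sum.inr i) (Sum.inl ()),
    (P * A * Q).toBlocks₂₂ - α • 1, hPQ, hQP, ?_⟩
  have hA' : A = Q * (P * A * Q) * P := by
    rw [← Matrix.mul_assoc, ← Matrix.mul_assoc, hQP, Matrix.one_mul, Matrix.mul_assoc, hQP,
      Matrix.mul_one]
  conv_lhs => rw [hA']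
  congr 2
  ext (i | i) (j | j)
  · simpa using congrFun hrow (Sum.inl ())
  · simpa [Matrix.one_apply, Pi.single_apply, eq_comm] using congrFun hrow (Sum.inr j)
  · simp
  · simp [toBlocks₂₂, Matrix.one_apply]

/-- A non-scalar matrix is a multiple of `a • 1 + b • A₀` with `a`, `b` coprime and `A₀` not
scalar modulo any maximal ideal. -/
lemma exists_eq_smul_add_smul [IsDomain R] [IsPrincipalIdealRing R] {κ : Type*} [Fintype κ]
    [DecidableEq κ] (i₀ : κ) (A : Matrix κ κ R) (hA : A ≠ A i₀ i₀ • 1) :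
    ∃ (d a b : R) (A₀ : Matrix κ κ R), d ≠ 0 ∧ IsCoprime a b ∧ A = d • (a • 1 + b • A₀) ∧
      ∀ p : Ideal R, p.IsMaximal →
        ¬∃ c : R ⧸ p, A₀.map (Ideal.Quotient.mk p) = c • (1 : Matrix κ κ (R ⧸ p)) := by
  obtain ⟨β, w, t, hβ, hw, hwt⟩ := exists_smul_unimodular
    (w := fun x : κ × κ => (A - A i₀ i₀ • 1) x.1 x.2) (fun h => hA (by
      rw [← sub_eq_zero]
      ext i j
      exact congrFun h (i, j)))
  have hw' : A = A i₀ i₀ • 1 + β • Matrix.of fun i j => w (i, j) := by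
    rw [← sub_eq_iff_eq_add']
    ext i j
    exact congrFun hw (i, j)
  have hw₀ : w (i₀, i₀) = 0 := by
    have h := congrFun hw (i₀, i₀)
    simpa [hβ] using h
  obtain ⟨d, a, b, hd, ha, hb, hab⟩ : ∃ d a b : R, d ≠ 0 ∧ A i₀ i₀ = d * a ∧ β = d * b ∧
      IsCoprime a b := by
    obtain ⟨d, y, z, hd, hy, hyz⟩ := exists_smul_unimodular (w := ![A i₀ i₀, β])
      (fun h => hβ (by simpa using congrFun h 1))
    refine ⟨d, y 0, y 1, hd, by simpa using congrFun hy 0, by simpa using congrFun hy 1,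
      z 0, z 1, ?_⟩
    rw [← hyz, dotProduct, Fin.sum_univ_two, mul_comm (z 0), mul_comm (z 1)]
  refine ⟨d, a, b, Matrix.of fun i j => w (i, j), hd, hab, ?_, ?_⟩
  · rw [smul_add, smul_smul, smul_smul, ← ha, ← hb]
    exact hw'
  · rintro p hp ⟨c, hc⟩
    have hc0 : c = 0 := by
      have h := congrFun (congrFun hc i₀) i₀
      simpa [hw₀, eq_comm] using h
    have hmem : ∀ x, w x ∈ p := fun x => by
      have h := congrFun (congrFun hc x.1) x.2
      rw [hc0, zero_smul] at h
      exact Ideal.Quotient.eq_zero_iff_mem.1 h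
    refine hp.ne_top ((Ideal.eq_top_iff_one p).2 ?_)
    rw [← hwt]
    exact p.sum_mem fun x _ => p.mul_mem_right _ (hmem x)

lemma trace_conj_of_mul_eq_one {ι κ : Type*} [Fintype ι] [Fintype κ] [DecidableEq ι]
    {P : Matrix ι κ R} {Q : Matrix κ ι R} (hPQ : P * Q = 1) (X : Matrix ι ι R) :
    (Q * X * P).trace = X.trace := by
  rw [trace_mul_comm, ← Matrix.mul_assoc, hPQ, Matrix.one_mul]

lemma conj_mul_conj_of_mul_eq_one {ι κ : Type*} [Fintype ι] [Fintype κ] [DecidableEq ι]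
    {P : Matrix ι κ R} {Q : Matrix κ ι R} (hPQ : P * Q = 1) (X Y : Matrix ι ι R) :
    Q * X * P * (Q * Y * P) = Q * (X * Y) * P := by
  rw [← Matrix.mul_assoc, ← Matrix.mul_assoc, Matrix.mul_assoc (Q * X), hPQ, Matrix.mul_one,
    Matrix.mul_assoc Q]

/-- Every trace-zero matrix is a multiple of a conjugate of a matrix covered by
`exists_borderedShift_commutator`, with coprime parameters `a` and `b`. -/
lemma exists_eq_smul_conj [IsDomain R] [IsPrincipalIdealRing R] (hk : k ≠ 0)
    (A : Matrix (Fin (k + 2)) (Fin (k + 2)) R) (hA : A.trace = 0) :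
    ∃ (P : Matrix (Unit ⊕ Fin (k + 1)) (Fin (k + 2)) R)
      (Q : Matrix (Fin (k + 2)) (Unit ⊕ Fin (k + 1)) R) (δ a b : R) (d : Fin (k + 1) → R)
      (B : Matrix (Fin (k + 1)) (Fin (k + 1)) R), P * Q = 1 ∧ Q * P = 1 ∧ IsCoprime a b ∧
      (k + 2) * a + b * B.trace = 0 ∧
      A = δ • (Q * (a • 1 +
        b • fromBlocks 0 (replicateRow Unit (Pi.single 0 1)) (replicateCol Unit d) B) * P) := by
  by_cases hs : A = A 0 0 • 1
  · obtain ⟨P, Q, hPQ, hQP, -⟩ := exists_matrix_of_dual_pair (R := R)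
      (κ := Fin (k + 2)) (ι := Unit ⊕ Fin (k + 1)) (i₀ := Sum.inl ()) (i₁ := Sum.inr 0)
      (by simp; omega) (by simp) (w₁ := Pi.single 0 1) (w₂ := Pi.single 1 1)
      (t₁ := Pi.single 0 1) (t₂ := Pi.single 1 1) (by simp) (by simp) (by simp) (by simp)
    by_cases h0 : A 0 0 = 0
    · refine ⟨P, Q, 0, 0, 1, 0, 0, hPQ, hQP, isCoprime_zero_left.2 isUnit_one, by simp, ?_⟩
      rw [zero_smul, hs, h0, zero_smul]
    · refine ⟨P, Q, A 0 0, 1, 0, 0, 0, hPQ, hQP, isCoprime_one_left, ?_, ?_⟩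
      · rw [hs, trace_smul, trace_one, Fintype.card_fin, smul_eq_mul, mul_eq_zero] at hA
        simpa using hA.resolve_left h0
      · rw [zero_smul, add_zero, one_smul, Matrix.mul_one, hQP]
        exact hs
  · obtain ⟨δ, a, b, A₀, hδ, hab, rfl, hA₀⟩ := exists_eq_smul_add_smul 0 A hs
    obtain ⟨P, Q, α, d, B, hPQ, hQP, rfl⟩ := exists_conj_fromBlocks hk A₀ hA₀
    have hconj : a • 1 + b • (Q * (α • 1 + fromBlocks 0 (replicateRow Unit (Pi.single 0 1))
        (replicateCol Unit d) B) * P) = Q * ((a + b * α) • 1 +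
        b • fromBlocks 0 (replicateRow Unit (Pi.single 0 1)) (replicateCol Unit d) B) * P := by
      simp only [Matrix.mul_add, Matrix.add_mul, Matrix.mul_smul, Matrix.smul_mul, Matrix.mul_one,
        hQP, smul_add, add_smul, smul_smul, add_assoc]
    refine ⟨P, Q, δ, a + b * α, b, d, B, hPQ, hQP, hab.add_mul_left_left α, ?_, ?_⟩
    · rw [hconj, trace_smul, trace_conj_of_mul_eq_one hPQ, smul_eq_mul, mul_eq_zero] at hA
      have h := hA.resolve_left hδ
      rw [← h]
      simp [Matrix.trace, Fintype.sum_sum_type, Finset.sum_add_distrib, Finset.mul_sum]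
      ring
    · rw [hconj]

end

/-- Main theorem: over a PID `R` with `n ≥ 3`, every trace-zero matrix `A` is a commutator
`[X, Y]` of trace-zero matrices, where `X` can be chosen so that `X mod p` is
`gl_n(R/p)`-regular for every maximal ideal `p`, and `sl_n(R/p)`-regular for every maximal
ideal `p` such that `A mod p` is non-scalar. -/
theorem trace_zero_is_commutator_PID {R : Type*} [CommRing R] [IsDomain R]
    [IsPrincipalIdealRing R] {n : ℕ} (hn : 3 ≤ n)
    (A : Matrix (Fin n) (Fin n) R) (hA : A.trace = 0) :
    ∃ X Y : Matrix (Fin n) (Fin n) R,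
      X.trace = 0 ∧ Y.trace = 0 ∧ X * Y - Y * X = A ∧
      (∀ (p : Ideal R), p.IsMaximal →
        Module.finrank (R ⧸ p) (glCent (X.map (Ideal.Quotient.mk p))) = n) ∧
      (∀ (p : Ideal R), p.IsMaximal →
        ¬ (∃ c : R ⧸ p, A.map (Ideal.Quotient.mk p) = c • (1 : Matrix (Fin n) (Fin n) (R ⧸ p))) →
        Module.finrank (R ⧸ p) (slCent (X.map (Ideal.Quotient.mk p))) = n - 1) := by
  obtain ⟨k, rfl⟩ := Nat.exists_eq_add_of_le' (show 2 ≤ n by omega)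
  obtain ⟨P, Q, δ, a, b, d, B, hPQ, hQP, hab, htr, rfl⟩ := exists_eq_smul_conj (by omega) A hA
  obtain ⟨u, Y, W, hu, hX, hY, hXY, hXW, hW⟩ :=
    exists_borderedShift_commutator (by omega) a b d B htr
  have hgl : ∀ p : Ideal R, p.IsMaximal → Module.finrank (R ⧸ p)
      (glCent ((Q * borderedShift b u * P).map (Ideal.Quotient.mk p))) = k + 2 := by
    intro p hp
    let _ := Ideal.Quotient.field p
    have h0 : Ideal.Quotient.mk p b ≠ 0 ∨ Ideal.Quotient.mk p (u (Fin.last k)) ≠ 0 := by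
      rw [hu]
      obtain ⟨x, y, hxy⟩ := hab
      by_contra! h
      have h1 := congrArg (Ideal.Quotient.mk p) hxy
      rw [map_add, map_mul, map_mul, h.1, h.2, mul_zero, mul_zero, add_zero, map_one] at h1
      exact zero_ne_one h1
    obtain ⟨ρ, hρ⟩ := exists_isRowCyclic_borderedShift (Ideal.Quotient.mk p b)
      (Ideal.Quotient.mk p ∘ u) h0
    rw [Matrix.map_mul, Matrix.map_mul, borderedShift_map]
    refine (hρ.conj (P := P.map (Ideal.Quotient.mk p)) (Q := Q.map (Ideal.Quotient.mk p))
      ?_ ?_).finrank_glCent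
    · rw [← Matrix.map_mul, hPQ, Matrix.map_one _ (map_zero _) (map_one _)]
    · rw [← Matrix.map_mul, hQP, Matrix.map_one _ (map_zero _) (map_one _)]
  refine ⟨Q * borderedShift b u * P, δ • (Q * Y * P), ?_, ?_, ?_, hgl, ?_⟩
  · rw [trace_conj_of_mul_eq_one hPQ, hX]
  · rw [trace_smul, trace_conj_of_mul_eq_one hPQ, hY, smul_zero]
  · rw [Matrix.mul_smul, Matrix.smul_mul, conj_mul_conj_of_mul_eq_one hPQ,
      conj_mul_conj_of_mul_eq_one hPQ, ← smul_sub, ← Matrix.sub_mul, ← Matrix.mul_sub, hXY]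
  · intro p hp hns
    let _ := Ideal.Quotient.field p
    have hb : Ideal.Quotient.mk p b ≠ 0 := by
      intro hb
      refine hns ⟨Ideal.Quotient.mk p (δ * a), ?_⟩
      rw [Matrix.mul_add, Matrix.add_mul, Matrix.mul_smul, Matrix.smul_mul, Matrix.mul_one, hQP,
        Matrix.mul_smul, Matrix.smul_mul, smul_add, smul_smul]
      ext i j
      by_cases h : i = j <;> simp [hb, h]
    have h := finrank_slCent_add_one (X := (Q * borderedShift b u * P).map (Ideal.Quotient.mk p))
      (W := (Q * W * P).map (Ideal.Quotient.mk p)) (by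
        rw [← Matrix.map_mul, ← Matrix.map_mul, conj_mul_conj_of_mul_eq_one hPQ,
          conj_mul_conj_of_mul_eq_one hPQ, hXW]) (by
        rw [← AddMonoidHom.map_trace, trace_conj_of_mul_eq_one hPQ, hW]
        exact hb)
    exact Nat.eq_sub_of_add_eq (h.trans (hgl p hp))
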